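/- Let Ω ⊂ ℝ² be a compact convex set of positive measure, let D ⊂ ℝ² be a closed convex set of finite positive measure with 0 in its interior, let Q ⊂ (0,∞) be a uniformly discrete set, and set P = Q∂D. If P is not a sampling set for B_Ω, then for every n ∈ ℕ and every ε > 0 there exist a function f_n ∈ B_{(1+ε)Ω} and a point x_n ∈ ℝ² such that |x_n| > n, ‖f_n‖_∞ = 1, sup_{x ∈ P} |f_n(x)| < 1/n, and |f_n(x_n)| > 1 − 1/n. -/

import Mathlib

open MeasureTheory FourierTransform Filter Metric
open scoped Pointwise RealInnerProductSpace ENNReal NNReal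

noncomputable section

variable {V : Type*} [NormedAddCommGroup V] [InnerProductSpace ℝ V]
  [FiniteDimensional ℝ V] [MeasurableSpace V] [BorelSpace V]

/-- `f` belongs to the Bernstein space `B_Ω`: it is a continuous bounded function which is the
inverse Fourier transform of a tempered distribution supported in `Ω`, i.e. its distributional
Fourier transform annihilates every test function whose support is disjoint from `Ω`. -/
def MemBernstein (Ω : Set V) (f : V → ℂ) : Prop :=
  Continuous f ∧ (∃ C, ∀ x, ‖f x‖ ≤ C) ∧
    ∀ ψ : V → ℂ, ContDiff ℝ (⊤ : ℕ∞) ψ → HasCompactSupport ψ → tsupport ψ ∩ Ω = ∅ →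
      ∫ x, f x * 𝓕 ψ x = 0

/-- `P` is a sampling set for the Bernstein space `B_Ω`:
`‖f‖_∞ ≤ C · sup_{x ∈ P} ‖f x‖` for all `f ∈ B_Ω`. -/
def IsSamplingSet (Ω P : Set V) : Prop :=
  ∃ C > 0, ∀ f : V → ℂ, MemBernstein Ω f →
    ∀ x : V, ‖f x‖ ≤ C * sSup ((fun p => ‖f p‖) '' P)

/-- A set is uniformly discrete if distinct points are separated by a fixed positive distance. -/
def UniformlyDiscrete {X : Type*} [PseudoMetricSpace X] (Λ : Set X) : Prop :=
  ∃ δ > 0, ∀ x ∈ Λ, ∀ y ∈ Λ, x ≠ y → δ ≤ dist x y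

/-- The lower uniform (Beurling) density of a set:
`D⁻(Λ) = lim_{r→∞} inf_x #(Λ ∩ B_r(x)) / |B_r(x)|`. -/
def lowerUniformDensity {X : Type*} [NormedAddCommGroup X] [MeasureSpace X] (Λ : Set X) : ℝ :=
  liminf (fun r : ℝ => ⨅ x : X,
    (Nat.card ↥(Λ ∩ closedBall x r) : ℝ) / (volume (closedBall x r)).toReal) atTop

open scoped Topology

theorem fourier_fourierChar_smul (ψ : V → ℂ) (x u : V) :
    𝓕 (fun ξ => 𝐞 ⟪ξ, x⟫ • ψ ξ) u = 𝓕 ψ (u - x) := by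
  simp only [Real.fourier_eq]
  congr 1 with ξ
  rw [smul_smul, ← AddChar.map_add_eq_mul, inner_sub_right]
  congr 2
  ring

theorem fourier_comp_add (ψ : V → ℂ) (c u : V) :
    𝓕 (fun ξ => ψ (ξ + c)) u = 𝐞 ⟪c, u⟫ • 𝓕 ψ u := by
  simp only [Real.fourier_eq, Circle.smul_def]
  rw [← integral_smul, ← integral_add_right_eq_self (fun v => (𝐞 ⟪c, u⟫ : ℂ) • _) c]
  congr 1 with ξ
  rw [smul_smul, ← Circle.coe_mul, ← AddChar.map_add_eq_mul, inner_add_left]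
  congr 3
  ring

theorem integrable_fourier_of_contDiff {ψ : V → ℂ} (hψ : ContDiff ℝ (⊤ : ℕ∞) ψ)
    (hc : HasCompactSupport ψ) : Integrable (𝓕 ψ) := by
  have h := (𝓕 (hc.toSchwartzMap hψ)).integrable (μ := volume)
  rw [SchwartzMap.fourier_coe] at h
  exact h

theorem integrable_mul_fourier {f ψ : V → ℂ} (hf : Continuous f) (hb : ∃ C, ∀ x, ‖f x‖ ≤ C)
    (hψ : ContDiff ℝ (⊤ : ℕ∞) ψ) (hc : HasCompactSupport ψ) :
    Integrable fun x => f x * 𝓕 ψ x := by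
  obtain ⟨C, hC⟩ := hb
  exact (integrable_fourier_of_contDiff hψ hc).bdd_mul hf.aestronglyMeasurable
    (Eventually.of_forall hC)

omit [FiniteDimensional ℝ V] [MeasurableSpace V] [BorelSpace V] in
theorem contDiff_fourierChar_inner (x : V) :
    ContDiff ℝ (⊤ : ℕ∞) fun ξ : V => (𝐞 ⟪ξ, x⟫ : ℂ) := by
  simp only [Real.fourierChar_apply]
  refine ContDiff.cexp (ContDiff.mul ?_ contDiff_const)
  exact Complex.ofRealCLM.contDiff.comp (contDiff_const.mul (contDiff_id.inner ℝ contDiff_const))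

namespace MemBernstein

variable {Ω Ω' : Set V} {f g : V → ℂ}

theorem mono (hf : MemBernstein Ω f) (h : Ω ⊆ Ω') : MemBernstein Ω' f := by
  refine ⟨hf.1, hf.2.1, fun ψ hψ hc hd => hf.2.2 ψ hψ hc ?_⟩
  exact Set.subset_eq_empty (Set.inter_subset_inter_right _ h) hd

theorem const_mul (hf : MemBernstein Ω f) (a : ℂ) : MemBernstein Ω fun x => a * f x := by
  obtain ⟨h1, ⟨C, hC⟩, h3⟩ := hf
  refine ⟨continuous_const.mul h1, ⟨‖a‖ * C, fun x => ?_⟩, fun ψ hψ hc hd => ?_⟩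
  · rw [norm_mul]
    exact mul_le_mul_of_nonneg_left (hC x) (norm_nonneg a)
  · simp only [mul_assoc]
    rw [integral_const_mul, h3 ψ hψ hc hd, mul_zero]

theorem add (hf : MemBernstein Ω f) (hg : MemBernstein Ω g) :
    MemBernstein Ω fun x => f x + g x := by
  obtain ⟨h1, ⟨C, hC⟩, h3⟩ := hf
  obtain ⟨k1, ⟨C', hC'⟩, k3⟩ := hg
  refine ⟨h1.add k1, ⟨C + C', fun x => (norm_add_le _ _).trans (add_le_add (hC x) (hC' x))⟩,
    fun ψ hψ hc hd => ?_⟩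
  simp only [add_mul]
  rw [integral_add (integrable_mul_fourier h1 ⟨C, hC⟩ hψ hc)
    (integrable_mul_fourier k1 ⟨C', hC'⟩ hψ hc), h3 ψ hψ hc hd, k3 ψ hψ hc hd, add_zero]

theorem sub (hf : MemBernstein Ω f) (hg : MemBernstein Ω g) :
    MemBernstein Ω fun x => f x - g x := by
  simpa [sub_eq_add_neg] using hf.add (hg.const_mul (-1))

theorem comp_add_right (hf : MemBernstein Ω f) (h : V) : MemBernstein Ω fun x => f (x + h) := by
  obtain ⟨h1, ⟨C, hC⟩, h3⟩ := hf
  refine ⟨by fun_prop, ⟨C, fun x => hC _⟩, fun ψ hψ hc hd => ?_⟩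
  rw [← integral_sub_right_eq_self _ h]
  simp only [sub_add_cancel, ← fourier_fourierChar_smul]
  have hts : tsupport (fun ξ => 𝐞 ⟪ξ, h⟫ • ψ ξ) ⊆ tsupport ψ := by
    refine closure_mono fun ξ hξ => ?_
    contrapose! hξ
    simp only [Function.mem_support, not_not] at hξ ⊢
    rw [hξ, smul_zero]
  refine h3 _ ?_ ?_ ?_
  · simp only [Circle.smul_def, smul_eq_mul]
    exact (contDiff_fourierChar_inner h).mul hψ
  · exact hc.of_isClosed_subset (isClosed_tsupport _) hts
  · exact Set.subset_eq_empty (Set.inter_subset_inter_left _ hts) hd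

theorem mul_fourierChar (hf : MemBernstein Ω f) (c : V) :
    MemBernstein ((fun ξ => ξ + c) '' Ω) fun x => (𝐞 ⟪c, x⟫ : ℂ) * f x := by
  obtain ⟨h1, ⟨C, hC⟩, h3⟩ := hf
  refine ⟨?_, ⟨C, fun x => by rw [norm_mul, Circle.norm_coe, one_mul]; exact hC x⟩,
    fun ψ hψ hc hd => ?_⟩
  · refine Continuous.mul ?_ h1
    simpa only [real_inner_comm c] using (contDiff_fourierChar_inner c).continuous
  · have hψ' := h3 (fun ξ => ψ (ξ + c)) (hψ.comp (contDiff_id.add contDiff_const))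
      (hc.comp_homeomorph (Homeomorph.addRight c)) ?_
    · rw [← hψ']
      congr 1 with x
      rw [fourier_comp_add, Circle.smul_def, smul_eq_mul]
      ring
    · have : tsupport (fun ξ => ψ (ξ + c)) = (Homeomorph.addRight c) ⁻¹' tsupport ψ :=
        tsupport_comp_eq_preimage ψ (Homeomorph.addRight c)
      rw [this, Set.eq_empty_iff_forall_notMem]
      rintro ξ ⟨hξ, hΩ⟩
      exact (Set.eq_empty_iff_forall_notMem.1 hd) (ξ + c) ⟨hξ, Set.mem_image_of_mem _ hΩ⟩

end MemBernstein

theorem fourier_comp_smul (ψ : V → ℂ) {s : ℝ} (hs : 0 < s) (u : V) :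
    𝓕 (fun ξ => ψ (s • ξ)) u = (s ^ Module.finrank ℝ V)⁻¹ • 𝓕 ψ (s⁻¹ • u) := by
  simp only [Real.fourier_eq]
  rw [← Measure.integral_comp_smul_of_nonneg _ _ _ (hR := hs.le)]
  congr 1 with ξ
  rw [real_inner_smul_left, real_inner_smul_right, mul_inv_cancel_left₀ hs.ne']

theorem integral_mul_fourier_dilate (f ψ : V → ℂ) {s : ℝ} (hs : 0 < s) (x : V) :
    ∫ u, f u * 𝓕 (fun ξ => 𝐞 ⟪ξ, x⟫ • ψ (s • ξ)) u = ∫ u, f (x + s • u) * 𝓕 ψ u := by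
  simp only [fourier_fourierChar_smul _ x, fourier_comp_smul ψ hs]
  rw [← integral_add_right_eq_self _ x]
  have h := Measure.integral_comp_inv_smul_of_nonneg volume
    (fun u => f (x + s • u) * ((s ^ Module.finrank ℝ V)⁻¹ • 𝓕 ψ u)) hs.le
  simp only [smul_inv_smul₀ hs.ne', mul_smul_comm] at h
  simp only [add_sub_cancel_right, mul_smul_comm]
  simp only [add_comm _ x]
  rw [h, integral_smul, smul_inv_smul₀ (pow_pos hs _).ne']

theorem tendsto_integral_dilate {f : V → ℂ} (hf : Continuous f) (hb : ∃ C, ∀ x, ‖f x‖ ≤ C)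
    {K : V → ℂ} (hK : Integrable K) (x : V) :
    Tendsto (fun s : ℝ => ∫ u, f (x + s • u) * K u) (𝓝[>] 0) (𝓝 (f x * ∫ u, K u)) := by
  obtain ⟨C, hC⟩ := hb
  rw [← integral_const_mul]
  refine tendsto_integral_filter_of_dominated_convergence (fun u => C * ‖K u‖) ?_ ?_
    (hK.norm.const_mul C) ?_
  · refine Eventually.of_forall fun s => ?_
    exact (hf.comp (by fun_prop)).aestronglyMeasurable.mul hK.1
  · refine Eventually.of_forall fun s => Eventually.of_forall fun u => ?_
    rw [norm_mul]
    exact mul_le_mul_of_nonneg_right (hC _) (norm_nonneg _)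
  · refine Eventually.of_forall fun u => Tendsto.mul_const _ ?_
    have : Continuous fun s : ℝ => f (x + s • u) := hf.comp (by fun_prop)
    simpa using (this.tendsto 0).mono_left nhdsWithin_le_nhds

/-- Functions in a Bernstein space with compact spectrum satisfy a common reproducing formula with
a Schwartz kernel. -/
theorem exists_reproducing_kernel {Ω : Set V} (hΩ : IsCompact Ω) :
    ∃ s : ℝ, 0 < s ∧ ∃ K : SchwartzMap V ℂ, ∀ f : V → ℂ, MemBernstein Ω f →
      ∀ x, f x = ∫ u, f (x + s • u) * K u := by
  let χ : ContDiffBump (0 : V) := ⟨1, 2, one_pos, one_lt_two⟩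
  let ψ : V → ℂ := fun ξ => (χ ξ : ℂ)
  have hψ : ContDiff ℝ (⊤ : ℕ∞) ψ := Complex.ofRealCLM.contDiff.comp χ.contDiff
  have hψc : HasCompactSupport ψ := χ.hasCompactSupport.comp_left Complex.ofReal_zero
  have hψ1 : ∀ ξ ∈ ball (0 : V) 1, ψ ξ = 1 := fun ξ hξ => by
    simp only [ψ]
    rw [χ.one_of_mem_closedBall (ball_subset_closedBall hξ), Complex.ofReal_one]
  obtain ⟨R, hR, hΩR⟩ := hΩ.isBounded.subset_ball_lt 0 0
  refine ⟨R⁻¹, inv_pos.2 hR, 𝓕 (hψc.toSchwartzMap hψ), fun f hf x => ?_⟩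
  rw [SchwartzMap.fourier_coe]
  change f x = ∫ u, f (x + R⁻¹ • u) * 𝓕 ψ u
  have hint := integrable_fourier_of_contDiff hψ hψc
  have hone : ∫ u, 𝓕 ψ u = 1 := by
    have h := congrFun (hψ.continuous.fourierInv_fourier_eq
      (hψ.continuous.integrable_of_hasCompactSupport hψc) hint) 0
    rw [Real.fourierInv_eq] at h
    simpa [hψ1] using h
  have hlim := tendsto_integral_dilate hf.1 hf.2.1 hint x
  rw [hone, mul_one] at hlim
  refine tendsto_nhds_unique hlim (tendsto_const_nhds.congr' ?_)
  have hmod : ∀ s : ℝ, 0 < s → ContDiff ℝ (⊤ : ℕ∞) (fun ξ : V => 𝐞 ⟪ξ, x⟫ • ψ (s • ξ)) ∧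
      HasCompactSupport (fun ξ : V => 𝐞 ⟪ξ, x⟫ • ψ (s • ξ)) := fun s hs => by
    constructor
    · simp only [Circle.smul_def, smul_eq_mul]
      exact (contDiff_fourierChar_inner x).mul (hψ.comp (contDiff_const_smul s))
    · exact (hψc.comp_homeomorph (Homeomorph.smulOfNeZero s hs.ne')).smul_left
  have hR' := inv_pos.2 hR
  filter_upwards [Ioc_mem_nhdsGT hR'] with s hs
  rw [← integral_mul_fourier_dilate f ψ hs.1, ← integral_mul_fourier_dilate f ψ hR', ← sub_eq_zero]
  obtain ⟨hs1, hs2⟩ := hmod s hs.1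
  obtain ⟨ht1, ht2⟩ := hmod R⁻¹ hR'
  rw [← integral_sub (integrable_mul_fourier hf.1 hf.2.1 ht1 ht2)
    (integrable_mul_fourier hf.1 hf.2.1 hs1 hs2)]
  rw [← hf.2.2 _ (ht1.sub hs1) (ht2.sub hs2)]
  · congr 1 with u
    rw [← mul_sub]
    congr 1
    simp only [Real.fourier_eq, smul_sub]
    rw [integral_sub]
    · exact (Real.fourierIntegral_convergent_iff u).2
        (ht1.continuous.integrable_of_hasCompactSupport ht2)
    · exact (Real.fourierIntegral_convergent_iff u).2
        (hs1.continuous.integrable_of_hasCompactSupport hs2)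
  · have hsub : Function.support (fun ξ : V => 𝐞 ⟪ξ, x⟫ • ψ (R⁻¹ • ξ) - 𝐞 ⟪ξ, x⟫ • ψ (s • ξ))
        ⊆ (ball (0 : V) R)ᶜ := by
      intro ξ hξ hball
      refine hξ ?_
      have h1 : ‖R⁻¹ • ξ‖ < 1 := by
        rw [norm_smul, Real.norm_of_nonneg hR'.le, inv_mul_lt_one₀ hR]
        exact mem_ball_zero_iff.1 hball
      have h2 : ‖s • ξ‖ < 1 := by
        refine lt_of_le_of_lt ?_ h1
        rw [norm_smul, norm_smul, Real.norm_of_nonneg hR'.le, Real.norm_of_nonneg hs.1.le]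
        exact mul_le_mul_of_nonneg_right hs.2 (norm_nonneg _)
      simp only
      rw [hψ1 _ (mem_ball_zero_iff.2 h1), hψ1 _ (mem_ball_zero_iff.2 h2), sub_self]
    rw [Set.eq_empty_iff_forall_notMem]
    rintro ξ ⟨hξ, hξΩ⟩
    exact closure_minimal hsub isOpen_ball.isClosed_compl hξ (hΩR hξΩ)

omit [FiniteDimensional ℝ V] [MeasurableSpace V] [BorelSpace V] in
theorem SchwartzMap.exists_norm_le_one_add_norm_pow_inv (K : SchwartzMap V ℂ) (k : ℕ) :
    ∃ C, ∀ x, ‖K x‖ ≤ C * ((1 + ‖x‖) ^ k)⁻¹ := by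
  refine ⟨2 ^ k * ((Finset.Iic (k, 0)).sup fun m => SchwartzMap.seminorm ℝ m.1 m.2) K,
    fun x => ?_⟩
  have h := SchwartzMap.one_add_le_sup_seminorm_apply (𝕜 := ℝ) (m := (k, 0)) le_rfl le_rfl K x
  rw [norm_iteratedFDeriv_zero] at h
  rw [← div_eq_mul_inv, le_div_iff₀ (by positivity), mul_comm]
  exact h

theorem SchwartzMap.tendsto_integral_norm_sub_translate (K : SchwartzMap V ℂ) :
    Tendsto (fun h : V => ∫ u, ‖K (u - h) - K u‖) (𝓝 0) (𝓝 0) := by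
  set k := Module.finrank ℝ V + 1
  obtain ⟨C, hC⟩ := K.exists_norm_le_one_add_norm_pow_inv k
  have hC0 : 0 ≤ C := by simpa using (norm_nonneg _).trans (hC 0)
  have hint : Integrable fun u : V => ((1 + ‖u‖) ^ k)⁻¹ := by
    have h := integrable_one_add_norm (E := V) (μ := volume) (r := k) (by simp [k])
    refine h.congr (Eventually.of_forall fun u => ?_)
    simp only
    rw [Real.rpow_neg (by positivity), Real.rpow_natCast]
  have hlim : Tendsto (fun h : V => ∫ u, ‖K (u - h) - K u‖) (𝓝 0) (𝓝 (∫ _ : V, (0 : ℝ))) := by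
    refine tendsto_integral_filter_of_dominated_convergence
      (fun u => (C * 2 ^ k + C) * ((1 + ‖u‖) ^ k)⁻¹) ?_ ?_ (hint.const_mul _) ?_
    · refine Eventually.of_forall fun h => Continuous.aestronglyMeasurable ?_
      exact ((K.continuous.comp (by fun_prop)).sub K.continuous).norm
    · filter_upwards [ball_mem_nhds (0 : V) one_pos] with h hh
      refine Eventually.of_forall fun u => ?_
      rw [norm_norm, add_mul]
      refine (norm_sub_le _ _).trans (add_le_add ((hC _).trans ?_) (hC u))
      rw [mul_assoc]
      refine mul_le_mul_of_nonneg_left ?_ hC0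
      rw [← div_eq_mul_inv, le_div_iff₀ (by positivity), inv_mul_le_iff₀ (by positivity),
        ← mul_pow]
      refine pow_le_pow_left₀ (by positivity) ?_ _
      have h1 : ‖u‖ ≤ ‖u - h‖ + ‖h‖ := by simpa using norm_add_le (u - h) h
      have h2 : ‖h‖ < 1 := mem_ball_zero_iff.1 hh
      linarith [norm_nonneg (u - h)]
    · refine Eventually.of_forall fun u => ?_
      have : Continuous fun h : V => ‖K (u - h) - K u‖ :=
        ((K.continuous.comp (by fun_prop)).sub continuous_const).norm
      simpa using this.tendsto 0
  simpa using hlim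

/-- Functions in a Bernstein space with compact spectrum are equicontinuous, uniformly with respect
to their sup norm. -/
theorem MemBernstein.exists_norm_sub_le {Ω : Set V} (hΩ : IsCompact Ω) :
    ∃ r > 0, ∀ h : V, ‖h‖ < r → ∀ f : V → ℂ, MemBernstein Ω f → ∀ M, (∀ x, ‖f x‖ ≤ M) →
      ∀ x, ‖f (x + h) - f x‖ ≤ M / 2 := by
  obtain ⟨s, hs, K, hK⟩ := exists_reproducing_kernel hΩ
  have hev := K.tendsto_integral_norm_sub_translate.eventually (gt_mem_nhds one_half_pos)
  obtain ⟨r, hr, hball⟩ := Metric.eventually_nhds_iff_ball.1 hev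
  refine ⟨s * r, mul_pos hs hr, fun h hh f hf M hM x => ?_⟩
  have hM0 : 0 ≤ M := (norm_nonneg _).trans (hM 0)
  have hKint := K.integrable (μ := volume)
  have hfs : Continuous fun u => f (x + s • u) := hf.1.comp (by fun_prop)
  have hdiff : f (x + h) - f x = ∫ u, f (x + s • u) * (K (u - s⁻¹ • h) - K u) := by
    simp only [mul_sub]
    rw [integral_sub (((hKint.comp_sub_right _)).bdd_mul hfs.aestronglyMeasurable
      (Eventually.of_forall fun u => hM _)) (hKint.bdd_mul hfs.aestronglyMeasurable
      (Eventually.of_forall fun u => hM _)), ← hK f hf x, hK f hf (x + h),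
      ← integral_add_right_eq_self (fun u => f (x + s • u) * K (u - s⁻¹ • h)) (s⁻¹ • h)]
    simp only [add_sub_cancel_right, smul_add, smul_inv_smul₀ hs.ne']
    congr 3 with u
    rw [add_assoc, add_comm h]
  have hsmall := hball (s⁻¹ • h) (by
    rw [mem_ball_zero_iff, norm_smul, Real.norm_of_nonneg (inv_pos.2 hs).le, inv_mul_lt_iff₀ hs]
    exact hh)
  rw [hdiff]
  calc _ ≤ ∫ u, M * ‖K (u - s⁻¹ • h) - K u‖ := by
        refine norm_integral_le_of_norm_le (((hKint.comp_sub_right _).sub hKint).norm.const_mul M)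
          (Eventually.of_forall fun u => ?_)
        rw [norm_mul]
        exact mul_le_mul_of_nonneg_right (hM _) (norm_nonneg _)
    _ = M * ∫ u, ‖K (u - s⁻¹ • h) - K u‖ := integral_const_mul _ _
    _ ≤ M * (1 / 2) := mul_le_mul_of_nonneg_left hsmall.le hM0
    _ = M / 2 := by ring

theorem norm_le_of_norm_add_nsmul_le {Ω : Set V} {h : V}
    (hh : ∀ f : V → ℂ, MemBernstein Ω f → ∀ M, (∀ x, ‖f x‖ ≤ M) → ∀ x, ‖f (x + h) - f x‖ ≤ M / 2)
    {c : ℝ} (y : V) (m : ℕ) {f : V → ℂ} (hf : MemBernstein Ω f) {M : ℝ} (hM : ∀ x, ‖f x‖ ≤ M)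
    (hc : ∀ j : ℕ, 1 ≤ j → j ≤ m → ‖f (y + j • h)‖ ≤ c) (hc0 : 0 ≤ c) :
    ‖f y‖ ≤ M / 2 ^ m + (2 ^ m - 1) * c := by
  induction m generalizing f M c with
  | zero => simpa using hM y
  | succ m ih =>
    have hih := ih (f := fun x => f (x + h) - f x) (c := 2 * c) ((hf.comp_add_right h).sub hf)
      (hh f hf M hM) (fun j h1 h2 => by
        refine (norm_sub_le _ _).trans ?_
        have h3 := hc (j + 1) (by lia) (by lia)
        rw [succ_nsmul, ← add_assoc] at h3
        linarith [hc j h1 (by lia)]) (by positivity)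
    have h1 := hc 1 le_rfl (by lia)
    rw [one_nsmul] at h1
    have h2 := norm_sub_norm_le (f y) (f (y + h))
    rw [norm_sub_rev] at h2
    have h3 : M / 2 / 2 ^ m = M / 2 ^ (m + 1) := by rw [pow_succ', div_div]
    rw [h3] at hih
    rw [pow_succ]
    simp only [pow_succ] at hih
    linarith

theorem exists_le_norm_add_nsmul {Ω : Set V} {h : V}
    (hh : ∀ f : V → ℂ, MemBernstein Ω f → ∀ M, (∀ x, ‖f x‖ ≤ M) → ∀ x, ‖f (x + h) - f x‖ ≤ M / 2)
    {a : ℝ} (ha : 0 < a) :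
    ∃ m : ℕ, ∃ c > 0, ∀ f : V → ℂ, MemBernstein Ω f → (∀ x, ‖f x‖ ≤ 1) → ∀ y, a ≤ ‖f y‖ →
      ∃ j : ℕ, 1 ≤ j ∧ j ≤ m ∧ c ≤ ‖f (y + j • h)‖ := by
  obtain ⟨m, hm⟩ := exists_pow_lt_of_lt_one (half_pos ha) one_half_lt_one
  refine ⟨m, a / 2 / 2 ^ m, by positivity, fun f hf h1 y hy => ?_⟩
  by_contra! hcon
  have h2 := norm_le_of_norm_add_nsmul_le hh y m hf h1 (fun j hj hj' => (hcon j hj hj').le)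
    (by positivity)
  have h3 : (2 ^ m - 1) * (a / 2 / 2 ^ m) ≤ a / 2 := by
    rw [mul_div_assoc', div_le_iff₀ (by positivity)]
    nlinarith
  rw [one_div, inv_pow] at hm
  rw [one_div] at h2
  linarith

/-- A function in a Bernstein space which is large at a point is bounded below, by a uniform
constant, somewhere in a distant segment of prescribed direction. -/
theorem exists_le_norm_add_nsmul_far {Ω : Set V} {h : V}
    (hh : ∀ f : V → ℂ, MemBernstein Ω f → ∀ M, (∀ x, ‖f x‖ ≤ M) → ∀ x, ‖f (x + h) - f x‖ ≤ M / 2)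
    {a : ℝ} (ha : 0 < a) (k : ℕ) :
    ∃ L : ℕ, ∃ c > 0, ∀ f : V → ℂ, MemBernstein Ω f → (∀ x, ‖f x‖ ≤ 1) → ∀ y, a ≤ ‖f y‖ →
      ∃ j : ℕ, k ≤ j ∧ j ≤ L ∧ c ≤ ‖f (y + j • h)‖ := by
  induction k with
  | zero => exact ⟨0, a, ha, fun f _ _ y hy => ⟨0, le_rfl, le_rfl, by simpa using hy⟩⟩
  | succ k ih =>
    obtain ⟨L, c, hc, hL⟩ := ih
    obtain ⟨m, c', hc', hm⟩ := exists_le_norm_add_nsmul hh hc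
    refine ⟨L + m, c', hc', fun f hf h1 y hy => ?_⟩
    obtain ⟨j, hj, hjL, hcj⟩ := hL f hf h1 y hy
    obtain ⟨i, hi, him, hci⟩ := hm f hf h1 _ hcj
    exact ⟨j + i, by lia, by lia, by rwa [add_nsmul, ← add_assoc]⟩

namespace MemBernstein

variable {Ω : Set V} {f : V → ℂ}

theorem sin_mul (hf : MemBernstein Ω f) {c : V} {η : ℝ} (hc : ‖c‖ ≤ η) :
    MemBernstein (Ω + closedBall 0 η) fun x => (Real.sin (2 * Real.pi * ⟪c, x⟫) : ℂ) * f x := by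
  have hsub : ∀ d : V, ‖d‖ ≤ η → (fun ξ => ξ + d) '' Ω ⊆ Ω + closedBall 0 η := by
    rintro d hd _ ⟨ξ, hξ, rfl⟩
    exact Set.add_mem_add hξ (mem_closedBall_zero_iff.2 hd)
  have h1 := (hf.mul_fourierChar c).mono (hsub c hc)
  have h2 := (hf.mul_fourierChar (-c)).mono (hsub (-c) (by rwa [norm_neg]))
  convert (h2.sub h1).const_mul (Complex.I / 2) using 2 with x
  simp only [Real.fourierChar_apply, inner_neg_left, Complex.ofReal_sin, Complex.sin]
  push_cast
  ring_nf

theorem sin_pow_mul (hf : MemBernstein Ω f) {c : V} {η : ℝ} (hc : ‖c‖ ≤ η) (N : ℕ) :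
    MemBernstein (Ω + closedBall 0 (N * η))
      fun x => (Real.sin (2 * Real.pi * ⟪c, x⟫) : ℂ) ^ N * f x := by
  have hη : 0 ≤ η := (norm_nonneg c).trans hc
  induction N with
  | zero => simpa using hf
  | succ N ih =>
    have h := ih.sin_mul hc
    rw [add_assoc, closedBall_add_closedBall (by positivity) hη, add_zero] at h
    convert h using 2 with x
    · push_cast
      ring_nf
    · ring

theorem exists_normalized (hf : MemBernstein Ω f) {P : Set V} {C : ℝ} (hC : 0 < C) {x : V}
    (hx : C * sSup ((fun p => ‖f p‖) '' P) < ‖f x‖) :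
    ∃ g : V → ℂ, MemBernstein Ω g ∧ IsLUB (Set.range fun y => ‖g y‖) 1 ∧
      ∀ p ∈ P, ‖g p‖ ≤ 1 / C := by
  have hbdd : BddAbove (Set.range fun y => ‖f y‖) := by
    obtain ⟨B, hB⟩ := hf.2.1
    exact ⟨B, Set.forall_mem_range.2 hB⟩
  have hlub := isLUB_csSup (Set.range_nonempty fun y => ‖f y‖) hbdd
  set M := sSup (Set.range fun y => ‖f y‖)
  have hfM : ∀ y, ‖f y‖ ≤ M := fun y => hlub.1 (Set.mem_range_self y)
  have hM : 0 < M := by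
    refine lt_of_le_of_lt (mul_nonneg hC.le (Real.sSup_nonneg ?_)) (hx.trans_le (hfM x))
    rintro _ ⟨p, -, rfl⟩
    exact norm_nonneg _
  have hnorm : ∀ y, ‖(M⁻¹ : ℂ) * f y‖ = M⁻¹ * ‖f y‖ := fun y => by
    rw [norm_mul, norm_inv, Complex.norm_real, Real.norm_of_nonneg hM.le]
  refine ⟨_, hf.const_mul (M⁻¹ : ℂ), ⟨?_, fun b hb => ?_⟩, fun p hp => ?_⟩
  · rintro _ ⟨y, rfl⟩
    simp only [hnorm]
    rw [inv_mul_le_one₀ hM]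
    exact hfM y
  · have h : M ≤ M * b := hlub.2 (by
      rintro _ ⟨y, rfl⟩
      have h := hb (Set.mem_range_self y)
      simp only [hnorm] at h
      rwa [inv_mul_le_iff₀ hM] at h)
    exact (le_mul_iff_one_le_right hM).1 h
  · rw [hnorm, inv_mul_le_iff₀ hM, mul_one_div, le_div_iff₀ hC, mul_comm]
    have hp' : ‖f p‖ ≤ sSup ((fun p => ‖f p‖) '' P) :=
      le_csSup (hbdd.mono (Set.image_subset_range _ _)) (Set.mem_image_of_mem _ hp)
    exact (mul_le_mul_of_nonneg_left hp' hC.le).trans (hx.le.trans (hfM x))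

end MemBernstein

omit [FiniteDimensional ℝ V] [MeasurableSpace V] [BorelSpace V] in
theorem Convex.exists_image_add_subset_smul {Ω : Set V} (hΩ : Convex ℝ Ω)
    (hint : (interior Ω).Nonempty) {ε : ℝ} (hε : 0 < ε) :
    ∃ ρ > 0, ∃ c : V, (fun ξ => ξ + c) '' (Ω + closedBall 0 ρ) ⊆ (1 + ε) • Ω := by
  obtain ⟨b, hb⟩ := hint
  obtain ⟨r, hr, hball⟩ := Metric.nhds_basis_closedBall.mem_iff.1 (mem_interior_iff_mem_nhds.1 hb)
  refine ⟨ε * r, mul_pos hε hr, ε • b, ?_⟩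
  rintro _ ⟨_, ⟨ξ, hξ, u, hu, rfl⟩, rfl⟩
  rw [hΩ.add_smul zero_le_one hε.le, one_smul]
  refine ⟨ξ, hξ, u + ε • b, ⟨b + ε⁻¹ • u, hball ?_, ?_⟩, (add_assoc _ _ _).symm⟩
  · rw [mem_closedBall_iff_norm, add_sub_cancel_left, norm_smul,
      Real.norm_of_nonneg (inv_pos.2 hε).le, inv_mul_le_iff₀ hε]
    exact mem_closedBall_zero_iff.1 hu
  · simp only [smul_add, smul_inv_smul₀ hε.ne']
    exact add_comm _ _

theorem exists_peak_of_isLUB {Ω Ω' P : Set V} {c : V} (hsub : (fun ξ => ξ + c) '' Ω ⊆ Ω')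
    {g : V → ℂ} (hg : MemBernstein Ω g) {M δ a R κ : ℝ} (hM : 0 < M)
    (hlub : IsLUB (Set.range fun y => ‖g y‖) M) (hδ0 : 0 ≤ δ) (hδ : δ < κ)
    (hP : ∀ p ∈ P, ‖g p‖ ≤ M * δ) {x : V} (hx : R < ‖x‖) (hgx : M * a < ‖g x‖) :
    ∃ f : V → ℂ, ∃ x : V, MemBernstein Ω' f ∧ R < ‖x‖ ∧
      sSup (Set.range fun y => ‖f y‖) = 1 ∧ sSup ((fun y => ‖f y‖) '' P) < κ ∧ a < ‖f x‖ := by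
  have hnorm : ∀ y, ‖(M⁻¹ : ℂ) * ((𝐞 ⟪c, y⟫ : ℂ) * g y)‖ = M⁻¹ * ‖g y‖ := fun y => by
    rw [norm_mul, norm_mul, Circle.norm_coe, one_mul, norm_inv, Complex.norm_real,
      Real.norm_of_nonneg hM.le]
  refine ⟨_, x, ((hg.mul_fourierChar c).mono hsub).const_mul (M⁻¹ : ℂ), hx, ?_, ?_, ?_⟩
  · simp only [hnorm]
    refine IsLUB.csSup_eq ⟨?_, fun b hb => ?_⟩ (Set.range_nonempty _)
    · rintro _ ⟨y, rfl⟩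
      rw [inv_mul_le_one₀ hM]
      exact hlub.1 (Set.mem_range_self y)
    · have h : M ≤ M * b := hlub.2 (by
        rintro _ ⟨y, rfl⟩
        exact (inv_mul_le_iff₀ hM).1 (hb (Set.mem_range_self y)))
      exact (le_mul_iff_one_le_right hM).1 h
  · refine lt_of_le_of_lt (Real.sSup_le ?_ hδ0) hδ
    rintro _ ⟨p, hp, rfl⟩
    simp only [hnorm]
    rw [inv_mul_le_iff₀ hM]
    exact hP p hp
  · rw [hnorm, lt_inv_mul_iff₀ hM]
    exact hgx

theorem four_mul_le_abs_sin {x : ℝ} (hx : 0 ≤ x) (hx' : 4 * x ≤ 1) :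
    4 * x ≤ |Real.sin (2 * Real.pi * x)| := by
  have h := Real.mul_le_sin (x := 2 * Real.pi * x) (by positivity) (by nlinarith [Real.pi_pos])
  have h4 : 2 / Real.pi * (2 * Real.pi * x) = 4 * x := by
    field_simp
    ring
  exact (h4 ▸ h).trans (le_abs_self _)

/-- If `P` is not a sampling set, then for every larger spectrum there are functions of sup norm
one, small on `P`, with peaks arbitrarily far away. -/
theorem exists_far_peak_of_not_isSamplingSet {Ω Ω' P : Set V} (hΩ : IsCompact Ω) {ρ : ℝ}
    (hρ : 0 < ρ) {c : V} (hsub : (fun ξ => ξ + c) '' (Ω + closedBall 0 ρ) ⊆ Ω') {e : V}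
    (he : ‖e‖ = 1) (hnot : ¬ IsSamplingSet Ω P) {n : ℕ} (hn : 0 < n) :
    ∃ f : V → ℂ, ∃ x : V, MemBernstein Ω' f ∧ (n : ℝ) < ‖x‖ ∧
      sSup (Set.range fun y => ‖f y‖) = 1 ∧ sSup ((fun y => ‖f y‖) '' P) < 1 / n ∧
        1 - 1 / n < ‖f x‖ := by
  have hn' : (0 : ℝ) < n := Nat.cast_pos.2 hn
  obtain ⟨r, hr, hlip⟩ := MemBernstein.exists_norm_sub_le hΩ
  set t := r / 2 with ht
  have ht0 : 0 < t := half_pos hr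
  have hh := hlip (t • e) (by rw [norm_smul, he, Real.norm_of_nonneg ht0.le]; linarith)
  obtain ⟨k, hk⟩ := exists_nat_gt (5 * n / t)
  rw [div_lt_iff₀ ht0] at hk
  obtain ⟨L, c₀, hc₀, hL⟩ := exists_le_norm_add_nsmul_far hh one_half_pos k
  set W : ℝ := n + L * t with hW
  obtain ⟨N₁, hN₁⟩ := pow_unbounded_of_one_lt (2 / c₀) one_lt_two
  obtain ⟨N₂, hN₂⟩ := exists_nat_gt (4 * ρ * W)
  set N := N₁ + N₂ with hN
  have hNpow : 2 ≤ 2 ^ N * c₀ := by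
    rw [div_lt_iff₀ hc₀] at hN₁
    refine hN₁.le.trans (mul_le_mul_of_nonneg_right ?_ hc₀.le)
    exact pow_le_pow_right₀ one_le_two (Nat.le_add_right _ _)
  have hN0 : (0 : ℝ) < N := by
    have : (0 : ℝ) < N₂ := lt_of_le_of_lt (by positivity) hN₂
    rw [hN, Nat.cast_add]
    positivity
  set η := ρ / N with hη
  have hη0 : 0 < η := div_pos hρ hN0
  have hNη : N * η = ρ := mul_div_cancel₀ ρ hN0.ne'
  have hηW : 4 * η * W ≤ 1 := by
    rw [hη, mul_div_assoc', div_mul_eq_mul_div, div_le_one hN0, hN, Nat.cast_add]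
    linarith [N₁.cast_nonneg (α := ℝ)]
  set m := c₀ * (16 * η * n) ^ N with hm
  have hm0 : 0 < m := by positivity
  set C := n / m + n + 1 with hC
  have hC0 : 0 < C := by positivity
  have hCn : n < C := by
    have : 0 < n / m := by positivity
    linarith
  have hCm : n < C * m := by
    have : n / m < C := by linarith
    rwa [div_lt_iff₀ hm0] at this
  obtain ⟨f, hf, x, hx⟩ : ∃ f : V → ℂ, MemBernstein Ω f ∧ ∃ x,
      C * sSup ((fun p => ‖f p‖) '' P) < ‖f x‖ := by
    by_contra! hcon
    exact hnot ⟨C, hC0, hcon⟩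
  obtain ⟨g, hg, hlub, hgP⟩ := hf.exists_normalized hC0 hx
  have hg1 : ∀ x, ‖g x‖ ≤ 1 := fun x => hlub.1 (Set.mem_range_self x)
  have ha1 : max (1 / 2 : ℝ) (1 - 1 / n) < 1 := by
    refine max_lt one_half_lt_one ?_
    have : (0 : ℝ) < 1 / n := by positivity
    linarith
  by_cases hfar : ∃ y : V, (n : ℝ) < ‖y‖ ∧ 1 - 1 / n < ‖g y‖
  · obtain ⟨y, hy, hgy⟩ := hfar
    have hΩsub : Ω ⊆ Ω + closedBall 0 ρ := fun ξ hξ =>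
      ⟨ξ, hξ, 0, mem_closedBall_self hρ.le, add_zero ξ⟩
    exact exists_peak_of_isLUB hsub (hg.mono hΩsub) one_pos hlub (δ := 1 / C) (by positivity)
      (one_div_lt_one_div_of_lt hn' hCn) (fun p hp => by rw [one_mul]; exact hgP p hp) hy
      (by rwa [one_mul])
  push Not at hfar
  obtain ⟨_, ⟨y, rfl⟩, hy, -⟩ := hlub.exists_between ha1
  have hyn : ‖y‖ ≤ n := by
    by_contra! hlt
    exact absurd (hfar y hlt) (not_le.2 ((le_max_right _ _).trans_lt hy))
  obtain ⟨j, hkj, hjL, hj⟩ := hL g hg hg1 y ((le_max_left _ _).trans hy.le)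
  have hG := hg.sin_pow_mul (c := η • e) (η := η)
    (by rw [norm_smul, he, Real.norm_of_nonneg hη0.le, mul_one]) N
  rw [hNη] at hG
  set G : V → ℂ := fun x => (Real.sin (2 * Real.pi * ⟪η • e, x⟫) : ℂ) ^ N * g x
  have hGnorm : ∀ x, ‖G x‖ = |Real.sin (2 * Real.pi * (η * ⟪e, x⟫))| ^ N * ‖g x‖ := fun x => by
    simp only [G]
    rw [norm_mul, norm_pow, Complex.norm_real, Real.norm_eq_abs, real_inner_smul_left]
  have hGg : ∀ x, ‖G x‖ ≤ ‖g x‖ := fun x => by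
    rw [hGnorm]
    exact mul_le_of_le_one_left (norm_nonneg _) (pow_le_one₀ (abs_nonneg _) (Real.abs_sin_le_one _))
  have hGlub := isLUB_csSup (Set.range_nonempty fun y => ‖G y‖)
    ⟨1, Set.forall_mem_range.2 fun x => (hGg x).trans (hg1 x)⟩
  set M := sSup (Set.range fun y => ‖G y‖)
  have hmM : m ≤ M := by
    refine le_trans ?_ (hGlub.1 (Set.mem_range_self (y + j • t • e)))
    simp only [hGnorm]
    rw [hm, mul_comm]
    have hey : |⟪e, y⟫| ≤ n := (abs_real_inner_le_norm e y).trans (by rwa [he, one_mul])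
    have hey' := abs_le.1 hey
    have hinner : ⟪e, y + j • t • e⟫ = ⟪e, y⟫ + j * t := by
      rw [inner_add_right, ← Nat.cast_smul_eq_nsmul ℝ, real_inner_smul_right,
        real_inner_smul_right, real_inner_self_eq_norm_sq, he]
      ring
    have hj1 : (k : ℝ) * t ≤ j * t := mul_le_mul_of_nonneg_right (Nat.cast_le.2 hkj) ht0.le
    have hj2 : (j : ℝ) * t ≤ L * t := mul_le_mul_of_nonneg_right (Nat.cast_le.2 hjL) ht0.le
    rw [hinner]
    set s := ⟪e, y⟫ + j * t
    have hs1 : 4 * n ≤ s := by linarith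
    have hs2 : s ≤ W := by linarith
    have hs0 : 0 ≤ s := by linarith
    have hηs : 4 * η * s ≤ 1 := (mul_le_mul_of_nonneg_left hs2 (by positivity)).trans hηW
    refine mul_le_mul (pow_le_pow_left₀ (by positivity) ?_ _) hj hc₀.le (by positivity)
    calc 16 * η * n = 4 * η * (4 * n) := by ring
      _ ≤ 4 * η * s := mul_le_mul_of_nonneg_left hs1 (by positivity)
      _ = 4 * (η * s) := by ring
      _ ≤ _ := four_mul_le_abs_sin (by positivity) (by linarith)
  have hM0 : 0 < M := hm0.trans_le hmM
  obtain ⟨_, ⟨z, rfl⟩, hz, -⟩ := hGlub.exists_between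
    (show M * max (1 / 2 : ℝ) (1 - 1 / n) < M from mul_lt_of_lt_one_right hM0 ha1)
  refine exists_peak_of_isLUB hsub hG hM0 hGlub (δ := 1 / (C * m)) (by positivity)
    (one_div_lt_one_div_of_lt hn' hCm) (fun p hp => ?_) (x := z) ?_
    (lt_of_le_of_lt (mul_le_mul_of_nonneg_left (le_max_right _ _) hM0.le) hz)
  · refine (hGg p).trans ((hgP p hp).trans ?_)
    rw [mul_one_div, div_le_div_iff₀ hC0 (by positivity), one_mul, mul_comm C]
    exact mul_le_mul_of_nonneg_right hmM hC0.le
  · by_contra! hzn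
    have hez : |⟪e, z⟫| ≤ n := (abs_real_inner_le_norm e z).trans (by rwa [he, one_mul])
    have hle : ‖G z‖ ≤ (8 * η * n) ^ N := by
      rw [hGnorm]
      refine (mul_le_of_le_one_right (by positivity) (hg1 z)).trans
        (pow_le_pow_left₀ (abs_nonneg _) ?_ _)
      refine Real.abs_sin_le_abs.trans ?_
      rw [abs_mul, abs_mul η, abs_of_pos hη0, abs_of_pos Real.two_pi_pos]
      calc 2 * Real.pi * (η * |⟪e, z⟫|) ≤ 8 * (η * n) := by
            refine mul_le_mul ?_ (mul_le_mul_of_nonneg_left hez hη0.le) (by positivity)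
              (by positivity)
            linarith [Real.pi_le_four]
        _ = 8 * η * n := by ring
    have hm2 : 2 * (8 * η * n) ^ N ≤ m := by
      have h16 : 16 * η * n = 2 * (8 * η * n) := by ring
      rw [hm, h16, mul_pow (2 : ℝ), ← mul_assoc, mul_comm c₀]
      exact mul_le_mul_of_nonneg_right hNpow (by positivity)
    have hz' := lt_of_le_of_lt (mul_le_mul_of_nonneg_left (le_max_left _ _) hM0.le) hz
    linarith

/-- Lemma 4: if `P = Q·∂D` is not a sampling set for `B_Ω`, then for every `n ∈ ℕ` and `ε > 0`
there exist `f_n ∈ B_{(1+ε)Ω}` and a point `x_n` with `|x_n| > n`, `‖f_n‖_∞ = 1`,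
`sup_P |f_n| < 1/n` and `|f_n(x_n)| > 1 − 1/n`. -/
theorem not_sampling_exists_far_peak
    (Ω : Set (EuclideanSpace ℝ (Fin 2))) (hΩcompact : IsCompact Ω) (hΩconvex : Convex ℝ Ω)
    (hΩpos : 0 < volume Ω)
    (D : Set (EuclideanSpace ℝ (Fin 2))) (hDclosed : IsClosed D) (hDconvex : Convex ℝ D)
    (hDpos : 0 < volume D) (hDfin : volume D < ⊤) (hD0 : 0 ∈ interior D)
    (Q : Set ℝ) (hQpos : Q ⊆ Set.Ioi 0) (hQud : UniformlyDiscrete Q)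
    (P : Set (EuclideanSpace ℝ (Fin 2))) (hP : P = {x | ∃ q ∈ Q, ∃ w ∈ frontier D, x = q • w})
    (hnot : ¬ IsSamplingSet Ω P) :
    ∀ n : ℕ, 0 < n → ∀ ε : ℝ, 0 < ε →
      ∃ f : EuclideanSpace ℝ (Fin 2) → ℂ, ∃ x : EuclideanSpace ℝ (Fin 2),
        MemBernstein ((1 + ε) • Ω) f ∧ (n : ℝ) < ‖x‖ ∧
          sSup (Set.range fun y => ‖f y‖) = 1 ∧
          sSup ((fun y => ‖f y‖) '' P) < 1 / n ∧
          1 - 1 / n < ‖f x‖ := by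
  intro n hn ε hε
  have hint : (interior Ω).Nonempty := by
    rw [Set.nonempty_iff_ne_empty]
    intro hempty
    refine hΩpos.ne' (measure_mono_null (fun x hx => ?_) (hΩconvex.addHaar_frontier volume))
    rw [frontier, hempty, Set.sdiff_empty]
    exact subset_closure hx
  obtain ⟨ρ, hρ, c, hsub⟩ := hΩconvex.exists_image_add_subset_smul hint hε
  exact exists_far_peak_of_not_isSamplingSet hΩcompact hρ hsub
    (e := EuclideanSpace.single 0 1) (by simp) hnot hn
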